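/- arXiv:1112.4065 — 5 statements merged into one kernel-verified Lean document; each statement's English description precedes it below -/
import Mathlib

section
/- For every τ ∈ ℝ: if |τ| ≤ 1 then ∫₀¹ ln|τ + cos(2πθ)| dθ = −ln 2, and if |τ| ≥ 1 then ∫₀¹ ln|τ + cos(2πθ)| dθ = −ln 2 + ln(|τ| + √(τ² − 1)). -/
/-!
On the unit circle `w = e^{ix}` the quadratic `(w² + 2τw + 1) / 2` equals `w (τ + cos x)`, so the
integral is its logarithmic Mahler measure. Write `τ = cos z` with `z` complex: the roots are
`-e^{±iz}`, of modulus `e^{∓ Im z}`, and Jensen's formula gives the value `|Im z| - log 2`. Since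
`‖cos z + 1‖ = 2 ‖cos (z/2)‖²` and `‖cos z - 1‖ = 2 ‖sin (z/2)‖²`, the distances from `τ` to the
foci `±1` add up to `2 cosh (Im z)`, which determines `|Im z|`. For real `τ` half that sum is
`max |τ| 1`.
-/

open Complex Polynomial
open scoped Real

theorem circleAverage_eq_integral_zero_one {E : Type*} [NormedAddCommGroup E] [NormedSpace ℝ E]
    (f : ℂ → E) (c : ℂ) (R : ℝ) :
    Real.circleAverage f c R = ∫ θ in (0 : ℝ)..1, f (circleMap c R (2 * π * θ)) := by
  rw [Real.circleAverage_def, intervalIntegral.integral_comp_mul_left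
    (fun x ↦ f (circleMap c R x)) Real.two_pi_pos.ne', mul_zero, mul_one]

theorem posLog_exp_neg_add_posLog_exp (t : ℝ) :
    Real.posLog (Real.exp (-t)) + Real.posLog (Real.exp t) = |t| := by
  rw [Real.posLog_apply, Real.posLog_apply, Real.log_exp, Real.log_exp, max_comm 0, max_comm 0,
    add_comm, max_zero_add_max_neg_zero_eq_abs_self]

theorem abs_add_add_abs_sub {α : Type*} [AddCommGroup α] [LinearOrder α]
    [IsOrderedAddMonoid α] (a b : α) : |a + b| + |a - b| = 2 • max |a| |b| := by
  grind

theorem half_norm_ofReal_add_one_add_norm_ofReal_sub_one (τ : ℝ) :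
    (‖(τ : ℂ) + 1‖ + ‖(τ : ℂ) - 1‖) / 2 = max |τ| 1 := by
  rw [← ofReal_one, ← ofReal_add, ← ofReal_sub, norm_real, norm_real, Real.norm_eq_abs,
    Real.norm_eq_abs, abs_add_add_abs_sub, abs_one, nsmul_eq_mul, Nat.cast_ofNat,
    mul_div_cancel_left₀ _ two_ne_zero]

theorem norm_cos_sq_add_norm_sin_sq (w : ℂ) : ‖cos w‖ ^ 2 + ‖sin w‖ ^ 2 = Real.cosh (2 * w.im) := by
  have norm_sq_cos : ‖cos w‖ ^ 2 = (Real.cos w.re * Real.cosh w.im) ^ 2 +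
      (Real.sin w.re * Real.sinh w.im) ^ 2 := by
    rw [cos_eq, ← normSq_eq_norm_sq]
    norm_cast
    rw [sub_eq_add_neg, ← neg_mul, ← ofReal_neg, normSq_add_mul_I, neg_sq]
  have norm_sq_sin : ‖sin w‖ ^ 2 = (Real.sin w.re * Real.cosh w.im) ^ 2 +
      (Real.cos w.re * Real.sinh w.im) ^ 2 := by
    rw [sin_eq, ← normSq_eq_norm_sq]
    norm_cast
    rw [normSq_add_mul_I]
  rw [norm_sq_cos, norm_sq_sin, Real.cosh_two_mul]
  linear_combination (Real.cosh w.im ^ 2 + Real.sinh w.im ^ 2) * Real.sin_sq_add_cos_sq w.re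

theorem norm_cos_add_one_add_norm_cos_sub_one (z : ℂ) :
    ‖cos z + 1‖ + ‖cos z - 1‖ = 2 * Real.cosh z.im := by
  obtain ⟨w, rfl⟩ : ∃ w, z = 2 * w := ⟨z / 2, by ring⟩
  have cos_add_one : cos (2 * w) + 1 = 2 * cos w ^ 2 := by rw [cos_two_mul]; ring
  have cos_sub_one : cos (2 * w) - 1 = -(2 * sin w ^ 2) := by rw [cos_two_mul_eq_one_sub]; ring
  have im_two_mul : (2 * w).im = 2 * w.im := by simp
  rw [cos_add_one, cos_sub_one, norm_neg, norm_mul, norm_mul, norm_pow, norm_pow, Complex.norm_two,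
    ← mul_add, norm_cos_sq_add_norm_sin_sq, im_two_mul]

theorem arcosh_half_norm_cos_add_one_add_norm_cos_sub_one (z : ℂ) :
    Real.arcosh ((‖cos z + 1‖ + ‖cos z - 1‖) / 2) = |z.im| := by
  rw [norm_cos_add_one_add_norm_cos_sub_one, mul_div_cancel_left₀ _ two_ne_zero, ← Real.cosh_abs,
    Real.arcosh_cosh (abs_nonneg _)]

/-- The quadratic `(X² + 2τX + 1) / 2`, whose modulus at `e^{ix}` is `‖τ + cos x‖`. The factor `1/2`
is kept inside because `log (2 * y) = log 2 + log y` fails at the zeros of `τ + cos x`. -/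
noncomputable def addCosPoly (τ : ℂ) : ℂ[X] := C (1 / 2) * (X ^ 2 + C (2 * τ) * X + 1)

theorem norm_eval_circleMap_addCosPoly (τ : ℂ) (x : ℝ) :
    ‖(addCosPoly τ).eval (circleMap 0 1 x)‖ = ‖τ + Real.cos x‖ := by
  have exp_mul_exp_neg : exp (x * I) * exp (-x * I) = 1 := by
    rw [← Complex.exp_add, neg_mul, add_neg_cancel, Complex.exp_zero]
  have eval_eq : (addCosPoly τ).eval (circleMap 0 1 x) = exp (x * I) * (τ + Real.cos x) := by
    simp only [addCosPoly, circleMap, eval_mul, eval_add, eval_pow, eval_X, eval_C, eval_one,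
      ofReal_cos, Complex.cos, ofReal_one, zero_add, one_mul]
    linear_combination (-1 / 2 : ℂ) * exp_mul_exp_neg
  rw [eval_eq, norm_mul, norm_exp_ofReal_mul_I, one_mul]

theorem addCosPoly_cos (z : ℂ) :
    addCosPoly (cos z) = C (1 / 2) * ((X + C (exp (z * I))) * (X + C (exp (-z * I)))) := by
  have exp_mul_exp_neg : C (exp (z * I)) * C (exp (-z * I)) = 1 := by
    rw [← C_mul, ← Complex.exp_add, neg_mul, add_neg_cancel, Complex.exp_zero, C_1]
  rw [addCosPoly, two_cos, C_add]
  linear_combination (-C (1 / 2 : ℂ)) * exp_mul_exp_neg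

theorem logMahlerMeasure_addCosPoly_cos (z : ℂ) :
    (addCosPoly (cos z)).logMahlerMeasure = -Real.log 2 + |z.im| := by
  have factors_ne_zero : (X + C (exp (z * I))) * (X + C (exp (-z * I))) ≠ 0 :=
    mul_ne_zero (X_add_C_ne_zero _) (X_add_C_ne_zero _)
  have norm_half : ‖(1 / 2 : ℂ)‖ = 2⁻¹ := by norm_num
  rw [addCosPoly_cos, logMahlerMeasure_C_mul (by norm_num) factors_ne_zero,
    logMahlerMeasure_mul_eq_add_logMahlerMeasure factors_ne_zero, logMahlerMeasure_X_add_C,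
    logMahlerMeasure_X_add_C, norm_half, Real.log_inv, norm_exp, norm_exp, mul_I_re, mul_I_re,
    neg_im, neg_neg, posLog_exp_neg_add_posLog_exp]

theorem integral_log_norm_add_cos_eq_logMahlerMeasure (τ : ℂ) :
    ∫ θ in (0 : ℝ)..1, Real.log ‖τ + Real.cos (2 * π * θ)‖ =
      (addCosPoly τ).logMahlerMeasure := by
  simp only [logMahlerMeasure_def, circleAverage_eq_integral_zero_one,
    norm_eval_circleMap_addCosPoly]

theorem stmt3_general (τ : ℂ) :
    ∫ θ in (0 : ℝ)..1, Real.log ‖τ + Real.cos (2 * π * θ)‖ =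
      -Real.log 2 + Real.arcosh ((‖τ + 1‖ + ‖τ - 1‖) / 2) := by
  obtain ⟨z, rfl⟩ := cos_surjective τ
  rw [integral_log_norm_add_cos_eq_logMahlerMeasure, logMahlerMeasure_addCosPoly_cos,
    arcosh_half_norm_cos_add_one_add_norm_cos_sub_one]

theorem integral_log_abs_add_cos (τ : ℝ) :
    ∫ θ in (0 : ℝ)..1, Real.log |τ + Real.cos (2 * π * θ)| =
      -Real.log 2 + Real.arcosh (max |τ| 1) := by
  rw [← half_norm_ofReal_add_one_add_norm_ofReal_sub_one, ← stmt3_general]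
  simp only [← ofReal_add, norm_real, Real.norm_eq_abs]

/-- The classical integral `∫₀¹ ln |τ + cos 2πθ| dθ`:
it equals `-ln 2` for `|τ| ≤ 1`, and `-ln 2 + ln (|τ| + √(τ² - 1))`
(i.e. `-ln 2 + arccosh |τ|`) for `|τ| ≥ 1`. -/
theorem stmt3 (τ : ℝ) :
    (|τ| ≤ 1 →
      (∫ θ in (0:ℝ)..1, Real.log |τ + Real.cos (2 * Real.pi * θ)|) = -Real.log 2) ∧
    (1 ≤ |τ| →
      (∫ θ in (0:ℝ)..1, Real.log |τ + Real.cos (2 * Real.pi * θ)|) =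
        -Real.log 2 + Real.log (|τ| + Real.sqrt (τ ^ 2 - 1))) := by
  rw [integral_log_abs_add_cos]
  exact ⟨fun h ↦ by rw [max_eq_right h, Real.arcosh_zero, add_zero],
    fun h ↦ by rw [max_eq_left h, Real.arcosh, sq_abs]⟩
end

section
/- Let ω ∈ ℝ be Diophantine and let μ, λ ∈ ℝ with 0 < |λ| < |μ|. Then the linear skew product (θ,x) ↦ (θ+ω, a(θ)x) with a(θ) = −(μ + λ cos(2πθ)) is reducible with multiplier b = −(μ + sign(μ)·√(μ² − λ²))/2; that is, there exists a continuous nonvanishing function c : ℝ/ℤ → ℝ such that c(θ+ω)·b = a(θ)·c(θ) for all θ ∈ ℝ/ℤ, where b = −(μ + sign(μ)·√(μ² − λ²))/2. -/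
/-!
Let `b` be the claimed multiplier and `r = -λ / (2b)`. Since `b² + μ b + λ² / 4 = 0`, the
coefficient factors as `a(θ) = b (1 + 2 r cos 2πθ + r²) = b ‖1 + r e^{2πiθ}‖²`, and `|r| < 1`.
If `u` solves the cohomological equation `u(θ + ω) - u(θ) = log (1 + r e^{2πiθ})`, then
`c = exp (2 Re u)` conjugates the skew product to the constant one. The equation is solved by
dividing the `n`-th Taylor coefficient of `log (1 + r z)` by `e^{2πinω} - 1`; the resulting series
converges as soon as the small divisors decay exponentially slower than `|r|ⁿ`, and for
Diophantine `ω` they decay only polynomially.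
-/

open Filter Topology
open scoped FourierTransform Real

/-- The skew product `(θ, x) ↦ (θ + ω, a(θ) x)` is reducible with multiplier `b`. Functions on
`ℝ/ℤ` are encoded as `1`-periodic functions on `ℝ`. -/
def IsReducibleCocycle (ω : ℝ) (a : ℝ → ℝ) (b : ℝ) : Prop :=
  ∃ c : ℝ → ℝ, Continuous c ∧ Function.Periodic c 1 ∧ (∀ θ, c θ ≠ 0) ∧
    ∀ θ, c (θ + ω) * b = a θ * c θ

/-- The cohomological equation `u(θ + ω) - u(θ) = g(θ)` over the rotation by `ω` has a continuous
`1`-periodic solution `u`. -/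
def IsCoboundary {E : Type*} [TopologicalSpace E] [Sub E] (ω : ℝ) (g : ℝ → E) : Prop :=
  ∃ u : ℝ → E, Continuous u ∧ Function.Periodic u 1 ∧ ∀ θ, u (θ + ω) - u θ = g θ

/-- The small divisors `‖nω‖` (distance to the nearest integer) of the rotation by `ω` decay
exponentially slower than `rⁿ`: this lets one divide by them the coefficients of a power series
that are of order `rⁿ`. -/
def IsExpNonresonant (ω r : ℝ) : Prop :=
  ∃ ρ > r, ∃ C > 0, ∀ n : ℕ, n ≠ 0 → C * ρ ^ n ≤ |n * ω - round (n * ω)|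

/-- The multiplier `b = -(μ + sign(μ) √(μ² - λ²)) / 2`, for `|λ| ≤ |μ|` the root of
larger modulus of `b² + μ b + λ² / 4 = 0`. -/
noncomputable def multiplier (μ lam : ℝ) : ℝ :=
  -((μ + Real.sign μ * √(μ ^ 2 - lam ^ 2)) / 2)

theorem fourierChar_intCast (n : ℤ) : 𝐞 (n : ℝ) = 1 := by
  rw [Real.fourierChar_apply', mul_comm]
  exact Circle.exp_int_mul_two_pi n

theorem four_mul_abs_sub_round_le_norm_fourierChar_sub_one (x : ℝ) :
    4 * |x - round x| ≤ ‖(𝐞 x : ℂ) - 1‖ := by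
  set y := x - round x with hy
  have hxy : 𝐞 x = 𝐞 y := by
    rw [hy, AddChar.map_sub_eq_div, fourierChar_intCast, div_one]
  have hnorm : ‖(𝐞 y : ℂ) - 1‖ = 2 * |Real.sin (π * y)| := by
    rw [Real.fourierChar_apply, mul_comm, Complex.norm_exp_I_mul_ofReal_sub_one, Real.norm_eq_abs,
      abs_mul, abs_two, mul_assoc, mul_div_cancel_left₀ _ two_ne_zero]
  have habs : |π * y| = π * |y| := by rw [abs_mul, abs_of_pos Real.pi_pos]
  have hsin : 2 / π * |π * y| ≤ |Real.sin (π * y)| := by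
    refine Real.mul_abs_le_abs_sin ?_
    rw [habs, div_eq_mul_one_div]
    exact mul_le_mul_of_nonneg_left (abs_sub_round x) Real.pi_pos.le
  rw [habs, ← mul_assoc, div_mul_cancel₀ _ Real.pi_ne_zero] at hsin
  rw [hxy, hnorm]
  linarith

section Coboundary

variable {ω : ℝ}

theorem IsCoboundary.continuousLinearMap_comp {R E F : Type*} [Semiring R]
    [TopologicalSpace E] [AddCommGroup E] [Module R E]
    [TopologicalSpace F] [AddCommGroup F] [Module R F]
    {g : ℝ → E} (hg : IsCoboundary ω g) (L : E →L[R] F) :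
    IsCoboundary ω (fun θ ↦ L (g θ)) := by
  obtain ⟨u, hcont, hper, hu⟩ := hg
  exact ⟨fun θ ↦ L (u θ), L.continuous.comp hcont, hper.comp L, fun θ ↦ by rw [← map_sub, hu]⟩

theorem IsCoboundary.isReducibleCocycle {g : ℝ → ℝ} (hg : IsCoboundary ω g) (b : ℝ) :
    IsReducibleCocycle ω (fun θ ↦ b * Real.exp (g θ)) b := by
  obtain ⟨u, hcont, hper, hu⟩ := hg
  refine ⟨fun θ ↦ Real.exp (u θ), hcont.rexp, hper.comp Real.exp,
    fun θ ↦ Real.exp_ne_zero _, fun θ ↦ ?_⟩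
  beta_reduce
  rw [← hu, mul_assoc, ← Real.exp_add, sub_add_cancel, mul_comm]

theorem isCoboundary_of_hasSum_fourierChar {E ι : Type*} [NormedAddCommGroup E]
    [NormedSpace ℂ E] [CompleteSpace E] {k : ι → ℤ} {a : ι → E} {g : ℝ → E}
    (hg : ∀ θ : ℝ, HasSum (fun i ↦ (𝐞 (k i * θ) : ℂ) • a i) (g θ))
    (hres : ∀ i, 𝐞 (k i * ω) = 1 → a i = 0)
    (hsum : Summable fun i ↦ ‖a i‖ / ‖(𝐞 (k i * ω) : ℂ) - 1‖) :
    IsCoboundary ω g := by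
  let v (i : ι) : E := ((𝐞 (k i * ω) : ℂ) - 1)⁻¹ • a i
  have hv (i : ι) : ((𝐞 (k i * ω) : ℂ) - 1) • v i = a i := by
    by_cases h : 𝐞 (k i * ω) = 1
    · simp [h, hres i h]
    · exact smul_inv_smul₀ (sub_ne_zero.2 <| mt Circle.coe_eq_one.1 h) _
  have hnorm (i : ι) (θ : ℝ) :
      ‖(𝐞 (k i * θ) : ℂ) • v i‖ ≤ ‖a i‖ / ‖(𝐞 (k i * ω) : ℂ) - 1‖ := by
    rw [norm_smul, Circle.norm_coe, one_mul, norm_smul, norm_inv, div_eq_inv_mul]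
  have hsummable (θ : ℝ) : Summable fun i ↦ (𝐞 (k i * θ) : ℂ) • v i :=
    .of_norm_bounded hsum (hnorm · θ)
  refine ⟨fun θ ↦ ∑' i, (𝐞 (k i * θ) : ℂ) • v i, ?_, fun θ ↦ ?_, fun θ ↦ ?_⟩
  · have := Real.continuous_fourierChar
    exact continuous_tsum (fun i ↦ by fun_prop) hsum hnorm
  · simp only [mul_add, mul_one, AddChar.map_add_eq_mul, fourierChar_intCast]
  · rw [← (hsummable _).tsum_sub (hsummable _), ← (hg θ).tsum_eq]
    refine tsum_congr fun i ↦ ?_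
    calc (𝐞 (k i * (θ + ω)) : ℂ) • v i - (𝐞 (k i * θ) : ℂ) • v i
        = (𝐞 (k i * θ) : ℂ) • ((𝐞 (k i * ω) : ℂ) - 1) • v i := by
          rw [mul_add, AddChar.map_add_eq_mul, Circle.coe_mul]
          module
      _ = (𝐞 (k i * θ) : ℂ) • a i := by rw [hv]

theorem IsExpNonresonant.exists_le_norm_fourierChar_sub_one {r : ℝ} (hω : IsExpNonresonant ω r) :
    ∃ ρ > r, ∃ C > 0, ∀ n : ℕ, n ≠ 0 → C * ρ ^ n ≤ ‖(𝐞 (n * ω) : ℂ) - 1‖ := by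
  obtain ⟨ρ, hρ, C, hC, hdiv⟩ := hω
  refine ⟨ρ, hρ, 4 * C, by positivity, fun n hn ↦ ?_⟩
  calc 4 * C * ρ ^ n = 4 * (C * ρ ^ n) := mul_assoc ..
    _ ≤ 4 * |n * ω - round (n * ω)| := by gcongr; exact hdiv n hn
    _ ≤ ‖(𝐞 (n * ω) : ℂ) - 1‖ := four_mul_abs_sub_round_le_norm_fourierChar_sub_one _

theorem IsExpNonresonant.isCoboundary_of_hasSum_pow {E : Type*} [NormedAddCommGroup E]
    [NormedSpace ℂ E] [CompleteSpace E] {r M : ℝ} (hω : IsExpNonresonant ω r) (hr : 0 ≤ r)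
    {a : ℕ → E} {g : ℝ → E} (ha₀ : a 0 = 0) (ha : ∀ n, ‖a n‖ ≤ M * r ^ n)
    (hg : ∀ θ, HasSum (fun n ↦ (𝐞 θ : ℂ) ^ n • a n) (g θ)) :
    IsCoboundary ω g := by
  obtain ⟨ρ, hrρ, C, hC, hdiv⟩ := hω.exists_le_norm_fourierChar_sub_one
  have hρ : 0 < ρ := hr.trans_lt hrρ
  have hM : 0 ≤ M := by simpa [ha₀] using ha 0
  refine isCoboundary_of_hasSum_fourierChar (k := ((↑) : ℕ → ℤ)) (a := a) (fun θ ↦ ?_)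
    (fun n hn ↦ ?_) ?_
  · simpa only [Int.cast_natCast, ← nsmul_eq_mul, AddChar.map_nsmul_eq_pow, Circle.coe_pow]
      using hg θ
  · by_contra hne
    have hpos : 0 < ‖(𝐞 (n * ω) : ℂ) - 1‖ :=
      (by positivity : 0 < C * ρ ^ n).trans_le (hdiv n (by rintro rfl; exact hne ha₀))
    rw [Int.cast_natCast] at hn
    simp [hn] at hpos
  · have hgeom : Summable fun n : ℕ ↦ M / C * (r / ρ) ^ n :=
      (summable_geometric_of_lt_one (by positivity) ((div_lt_one hρ).2 hrρ)).mul_left _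
    refine hgeom.of_nonneg_of_le (fun n ↦ by positivity) fun n ↦ ?_
    rcases eq_or_ne n 0 with rfl | hn
    · simpa [ha₀] using div_nonneg hM hC.le
    calc ‖a n‖ / ‖(𝐞 ((n : ℤ) * ω) : ℂ) - 1‖
        ≤ M * r ^ n / (C * ρ ^ n) := by
          rw [Int.cast_natCast]
          exact div_le_div₀ (by positivity) (ha n) (by positivity) (hdiv n hn)
      _ = M / C * (r / ρ) ^ n := by rw [mul_div_mul_comm, div_pow]

end Coboundary

section Log

variable {ω : ℝ}

theorem isCoboundary_log_one_add_mul_fourierChar {r : ℂ} (hr : ‖r‖ < 1)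
    (hω : IsExpNonresonant ω ‖r‖) :
    IsCoboundary ω (fun θ ↦ Complex.log (1 + r * 𝐞 θ)) := by
  refine hω.isCoboundary_of_hasSum_pow (norm_nonneg r) (M := 1)
    (a := fun n ↦ (-1) ^ (n + 1) * r ^ n / n) (by simp) (fun n ↦ ?_) (fun θ ↦ ?_)
  · rcases eq_or_ne n 0 with rfl | hn
    · simp
    · simpa using div_le_self (by positivity) (Nat.one_le_cast.2 (Nat.one_le_iff_ne_zero.2 hn))
  · have hz : ‖r * 𝐞 θ‖ < 1 := by rwa [norm_mul, Circle.norm_coe, mul_one]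
    refine (Complex.hasSum_taylorSeries_log hz).congr_fun fun n ↦ ?_
    rw [smul_eq_mul, mul_pow]
    ring

theorem exp_two_mul_re_log {z : ℂ} (hz : z ≠ 0) : Real.exp (2 * (Complex.log z).re) = ‖z‖ ^ 2 := by
  rw [Complex.log_re, two_mul, Real.exp_add, Real.exp_log (norm_pos_iff.2 hz), sq]

theorem isReducibleCocycle_mul_norm_one_add_sq {r : ℂ} (hr : ‖r‖ < 1)
    (hω : IsExpNonresonant ω ‖r‖) (b : ℝ) :
    IsReducibleCocycle ω (fun θ ↦ b * ‖1 + r * 𝐞 θ‖ ^ 2) b := by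
  have hne (θ : ℝ) : 1 + r * 𝐞 θ ≠ 0 := fun h ↦ by
    have : ‖r * 𝐞 θ‖ = 1 := by rw [← neg_eq_of_add_eq_zero_right h, norm_neg, norm_one]
    rw [norm_mul, Circle.norm_coe, mul_one] at this
    exact hr.ne this
  have hlog := (isCoboundary_log_one_add_mul_fourierChar hr hω).continuousLinearMap_comp
    ((2 : ℝ) • Complex.reCLM)
  have hcocycle := hlog.isReducibleCocycle b
  simpa only [smul_apply, Complex.reCLM_apply, smul_eq_mul,
    exp_two_mul_re_log (hne _)] using hcocycle

theorem norm_one_add_ofReal_mul_fourierChar_sq (r θ : ℝ) :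
    ‖1 + (r : ℂ) * 𝐞 θ‖ ^ 2 = 1 + 2 * r * Real.cos (2 * π * θ) + r ^ 2 := by
  have hre : (𝐞 θ : ℂ).re = Real.cos (2 * π * θ) := by
    rw [Real.fourierChar_apply, Complex.exp_ofReal_mul_I_re]
  rw [← Complex.normSq_eq_norm_sq, Complex.normSq_add, map_mul, Circle.normSq_coe, map_one,
    Complex.normSq_ofReal, one_mul, Complex.conj_re, Complex.re_ofReal_mul, hre]
  ring

end Log

section Multiplier

variable {μ lam : ℝ}

theorem multiplier_sq_add (h : |lam| ≤ |μ|) :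
    multiplier μ lam ^ 2 + μ * multiplier μ lam + lam ^ 2 / 4 = 0 := by
  have hsqrt : √(μ ^ 2 - lam ^ 2) ^ 2 = μ ^ 2 - lam ^ 2 :=
    Real.sq_sqrt (sub_nonneg.2 (sq_le_sq.2 h))
  unfold multiplier
  rcases eq_or_ne μ 0 with rfl | hμ
  · obtain rfl : lam = 0 := by simpa using h
    simp
  · rcases Real.sign_apply_eq_of_ne_zero μ hμ with hs | hs <;>
    · rw [hs]
      linear_combination hsqrt / 4

theorem abs_le_two_mul_abs_multiplier (μ lam : ℝ) : |μ| ≤ 2 * |multiplier μ lam| := by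
  have hsqrt := Real.sqrt_nonneg (μ ^ 2 - lam ^ 2)
  rw [multiplier, abs_neg, abs_div, abs_two, mul_div_cancel₀ _ two_ne_zero]
  rcases lt_trichotomy μ 0 with hμ | rfl | hμ
  · rw [Real.sign_of_neg hμ, abs_of_neg hμ, abs_of_neg (by linarith)]
    linarith
  · simp
  · rw [Real.sign_of_pos hμ, abs_of_pos hμ, abs_of_pos (by linarith)]
    linarith

theorem multiplier_ne_zero (hμ : μ ≠ 0) : multiplier μ lam ≠ 0 := fun hb ↦ by
  have := (abs_pos.2 hμ).trans_le (abs_le_two_mul_abs_multiplier μ lam)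
  simp [hb] at this

theorem abs_div_two_mul_abs_multiplier_lt_one (h : |lam| < |μ|) :
    |lam| / (2 * |multiplier μ lam|) < 1 := by
  have hb := h.trans_le (abs_le_two_mul_abs_multiplier μ lam)
  exact (div_lt_one ((abs_nonneg lam).trans_lt hb)).2 hb

theorem neg_add_mul_eq_multiplier_mul (hμ : μ ≠ 0) (h : |lam| ≤ |μ|) (t : ℝ) :
    -(μ + lam * t) = multiplier μ lam *
      (1 + 2 * (-lam / (2 * multiplier μ lam)) * t + (-lam / (2 * multiplier μ lam)) ^ 2) := by
  have hb : multiplier μ lam ≠ 0 := multiplier_ne_zero hμ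
  have hquad := multiplier_sq_add h
  field_simp
  linear_combination -4 * hquad

end Multiplier

theorem isExpNonresonant_of_diophantine {ω C τ r : ℝ} (hC : 0 < C)
    (hω : ∀ p q : ℤ, q ≠ 0 → C * |(q : ℝ)| ^ (-τ) ≤ |(q : ℝ) * ω - (p : ℝ)|) (hr : r < 1) :
    IsExpNonresonant ω r := by
  obtain ⟨ρ, hρ, hρ₁⟩ := exists_between (max_lt hr zero_lt_one)
  obtain ⟨hrρ, hρ₀⟩ := max_lt_iff.1 hρ
  have hlim : Tendsto (fun n : ℕ ↦ (n : ℝ) ^ ⌈τ⌉₊ * ρ ^ n) atTop (𝓝 0) :=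
    tendsto_pow_const_mul_const_pow_of_abs_lt_one _ (by rwa [abs_of_pos hρ₀])
  obtain ⟨M, hM⟩ := hlim.bddAbove_range
  have hM₀ : 0 < M := hρ₀.trans_le (by simpa using hM ⟨1, rfl⟩)
  refine ⟨ρ, hrρ, C / M, by positivity, fun n hn ↦ ?_⟩
  have hn₁ : (1 : ℝ) ≤ n := Nat.one_le_cast.2 (Nat.one_le_iff_ne_zero.2 hn)
  have hn₀ : (0 : ℝ) < n := one_pos.trans_le hn₁
  have hpow : (n : ℝ) ^ τ * ρ ^ n ≤ M :=
    calc (n : ℝ) ^ τ * ρ ^ n ≤ (n : ℝ) ^ ⌈τ⌉₊ * ρ ^ n := by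
          rw [← Real.rpow_natCast (n : ℝ)]
          gcongr
          exact Nat.le_ceil τ
      _ ≤ M := hM ⟨n, rfl⟩
  calc C / M * ρ ^ n ≤ C * (n : ℝ) ^ (-τ) := by
        rw [Real.rpow_neg hn₀.le, div_mul_eq_mul_div, ← div_eq_mul_inv,
          div_le_div_iff₀ hM₀ (Real.rpow_pos_of_pos hn₀ τ), mul_assoc, mul_comm (ρ ^ n)]
        gcongr
    _ ≤ |n * ω - round (n * ω)| := by
        simpa using hω (round (n * ω)) n (Nat.cast_ne_zero.2 hn)

theorem stmt6_general {ω μ lam : ℝ} (h : |lam| < |μ|)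
    (hω : IsExpNonresonant ω (|lam| / (2 * |multiplier μ lam|))) :
    IsReducibleCocycle ω (fun θ ↦ -(μ + lam * Real.cos (2 * π * θ))) (multiplier μ lam) := by
  let r : ℝ := -lam / (2 * multiplier μ lam)
  have hr : ‖(r : ℂ)‖ = |lam| / (2 * |multiplier μ lam|) := by
    rw [Complex.norm_real, Real.norm_eq_abs, abs_div, abs_neg, abs_mul, abs_two]
  rw [← hr] at hω
  have hred := isReducibleCocycle_mul_norm_one_add_sq
    (hr.trans_lt (abs_div_two_mul_abs_multiplier_lt_one h)) hω (multiplier μ lam)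
  simp only [norm_one_add_ofReal_mul_fourierChar_sq] at hred
  have hμ : μ ≠ 0 := abs_pos.1 ((abs_nonneg lam).trans_lt h)
  simpa only [neg_add_mul_eq_multiplier_mul hμ h.le] using hred

/-- For a Diophantine rotation `ω` and `0 < |λ| < |μ|`, the linear
skew product `(θ,x) ↦ (θ+ω, a(θ)x)` with `a(θ) = -(μ + λ cos 2πθ)` (the linearization
of the model map around its trivial invariant set) is reducible with multiplier
`b = -(μ + sign(μ)·√(μ² - λ²))/2`: there is a continuous, `1`-periodic, nonvanishing
`c : ℝ → ℝ` (modelling `c : ℝ/ℤ → ℝ`) with `c(θ+ω)·b = a(θ)·c(θ)` for all `θ`. -/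
theorem stmt6 (ω : ℝ)
    (hdio : ∃ C : ℝ, 0 < C ∧ ∃ τ : ℝ, 0 < τ ∧ ∀ p q : ℤ, q ≠ 0 →
      C * |(q : ℝ)| ^ (-τ) ≤ |(q : ℝ) * ω - (p : ℝ)|)
    (μ lam : ℝ) (h0 : 0 < |lam|) (h1 : |lam| < |μ|) :
    ∃ c : ℝ → ℝ, Continuous c ∧ Function.Periodic c 1 ∧ (∀ θ, c θ ≠ 0) ∧
      ∀ θ, c (θ + ω) * (-((μ + Real.sign μ * Real.sqrt (μ ^ 2 - lam ^ 2)) / 2)) =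
        (-(μ + lam * Real.cos (2 * Real.pi * θ))) * c θ := by
  obtain ⟨C, hC, τ, -, hω⟩ := hdio
  exact stmt6_general h1 <|
    isExpNonresonant_of_diophantine hC hω (abs_div_two_mul_abs_multiplier_lt_one h1)
end

section
/- Let α > 0, |ε| ≤ 1 and 1 − 2/α ≤ |ε|. Then every invariant curve u : ℝ/ℤ → ℝ of the FLM satisfies u(θ) ≤ 1/2 for some θ ∈ ℝ/ℤ. (Hence |ε| < 1 − 2/α is a necessary condition for the existence of an invariant curve lying strictly above the critical set {x = 1/2}; in particular, for α > 2 it is necessary for the reducibility of the invariant curve x_{α,ε} continuing x_{α,0} ≡ 1 − 1/α.) -/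
/-!
Since `x (1 - x) ≤ 1/4`, an invariant curve lies on or below the post-critical curve `P₁` wherever
`P₁` is nonnegative, so it suffices to find a point of `P₁` with height in `[0, 1/2]`. If
`|ε| ≥ 1`, the forcing vanishes somewhere and `P₁` has a point of height `0`. If `|ε| < 1`, the
condition `1 - 2/α ≤ |ε|` forces `α > 0` and says exactly that the minimum `(α/4) (1 - |ε|)` of `P₁`
is at most `1/2`.
-/

theorem mul_mul_one_sub_le_div_four {K : Type*} [Field K] [LinearOrder K] [IsStrictOrderedRing K]
    {a : K} (ha : 0 ≤ a) (x : K) : a * x * (1 - x) ≤ a / 4 := by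
  have hsq : 0 ≤ a * (x - 1 / 2) ^ 2 := mul_nonneg ha (sq_nonneg _)
  linarith

theorem exists_mul_cos_two_pi_mul_eq {ε y : ℝ} (hy : |y| ≤ |ε|) :
    ∃ θ : ℝ, ε * Real.cos (2 * Real.pi * θ) = y := by
  obtain rfl | hε := eq_or_ne ε 0
  · exact ⟨0, by simpa [eq_comm] using hy⟩
  have hquot : |y / ε| ≤ 1 := by
    rw [abs_div]
    exact div_le_one_of_le₀ hy (abs_nonneg ε)
  obtain ⟨hlower, hupper⟩ := abs_le.mp hquot
  refine ⟨Real.arccos (y / ε) / (2 * Real.pi), ?_⟩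
  rw [mul_div_cancel₀ _ Real.two_pi_pos.ne', Real.cos_arccos hlower hupper, mul_div_cancel₀ _ hε]

/-- The post-critical set `P₁` of the forced logistic map, written as the height over the angle `θ`
of the image of the critical set `{x = 1/2}`. Angles are represented by real numbers. -/
noncomputable def postCritical (α ε ω θ : ℝ) : ℝ :=
  α / 4 * (1 + ε * Real.cos (2 * Real.pi * (θ - ω)))

theorem exists_postCritical_eq (α ω : ℝ) {ε y : ℝ} (hy : |y| ≤ |ε|) :
    ∃ θ, postCritical α ε ω θ = α / 4 * (1 + y) := by
  obtain ⟨θ, hθ⟩ := exists_mul_cos_two_pi_mul_eq hy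
  exact ⟨θ + ω, by rw [postCritical, add_sub_cancel_right, hθ]⟩

theorem exists_postCritical_mem_Icc {α ε : ℝ} (ω : ℝ) (hc : 1 - 2 / α ≤ |ε|) :
    ∃ θ, postCritical α ε ω θ ∈ Set.Icc 0 (1 / 2) := by
  obtain hε | hε := le_or_gt 1 |ε|
  · obtain ⟨θ, hθ⟩ := exists_postCritical_eq α ω (by simpa using hε : |(-1 : ℝ)| ≤ |ε|)
    exact ⟨θ, by norm_num [hθ]⟩
  · obtain ⟨θ, hθ⟩ := exists_postCritical_eq α ω (abs_neg |ε| |>.trans (abs_abs ε)).le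
    have hα : 0 < α := (div_pos_iff_of_pos_left two_pos).mp (by linarith : 0 < 2 / α)
    have hupper : (1 - |ε|) * α ≤ 2 := (le_div_iff₀ hα).mp (by linarith)
    have hlower : 0 ≤ (1 - |ε|) * α := mul_nonneg (sub_nonneg.mpr hε.le) hα.le
    exact ⟨θ, by rw [hθ]; constructor <;> linarith⟩

theorem le_postCritical_of_invariant {α ε ω : ℝ} {u : ℝ → ℝ}
    (hinv : ∀ θ, u (θ + ω) = α * u θ * (1 - u θ) * (1 + ε * Real.cos (2 * Real.pi * θ)))
    {θ : ℝ} (hθ : 0 ≤ postCritical α ε ω θ) : u θ ≤ postCritical α ε ω θ :=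
  calc
    u θ = u (θ - ω + ω) := by rw [sub_add_cancel]
    _ = 4 * postCritical α ε ω θ * u (θ - ω) * (1 - u (θ - ω)) := by
      rw [hinv, postCritical]; ring
    _ ≤ 4 * postCritical α ε ω θ / 4 := mul_mul_one_sub_le_div_four (by positivity) _
    _ = postCritical α ε ω θ := by ring

-- At `α = 0` the convention `2 / 0 = 0` turns `hc` into `1 ≤ |ε|`, but there `hinv` gives `u = 0`.
theorem stmt13_general {α ε ω : ℝ} (hc : 1 - 2 / α ≤ |ε|) {u : ℝ → ℝ}
    (hinv : ∀ θ, u (θ + ω) =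
      α * u θ * (1 - u θ) * (1 + ε * Real.cos (2 * Real.pi * θ))) :
    ∃ θ, u θ ≤ 1 / 2 := by
  obtain ⟨θ, hnonneg, hle⟩ := exists_postCritical_mem_Icc ω hc
  exact ⟨θ, (le_postCritical_of_invariant hinv hnonneg).trans hle⟩

/-- For the forced logistic map with `α > 0`, `|ε| ≤ 1` and
`1 - 2/α ≤ |ε|` (so the critical set `{x = 1/2}` and the post-critical set `P₁`
intersect), every invariant curve `u` (continuous and `1`-periodic, modelling a curve
on `ℝ/ℤ`) satisfies `u(θ) ≤ 1/2` for some `θ`.  Hence `|ε| < 1 - 2/α` is a necessary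
condition for the existence of an invariant curve lying strictly above the
critical set. -/
theorem stmt13 (α ε ω : ℝ) (hα : 0 < α) (hε : |ε| ≤ 1) (hc : 1 - 2 / α ≤ |ε|)
    (u : ℝ → ℝ) (hu : Continuous u) (huper : Function.Periodic u 1)
    (hinv : ∀ θ, u (θ + ω) =
      α * u θ * (1 - u θ) * (1 + ε * Real.cos (2 * Real.pi * θ))) :
    ∃ θ, u θ ≤ 1 / 2 :=
  stmt13_general hc hinv
end

section
/- Let ω ∈ ℝ∖ℚ and let μ, λ ∈ ℝ satisfy 0 < |λ| < μ and 1 + λ²/2 < μ < 3/2 − 2|λ|. Then the model map G(θ,x) = (θ + ω, x(x² − (μ + λ cos(2πθ)))) has a two-periodic continuous non-trivial invariant curve: there exists a continuous function u : ℝ/ℤ → ℝ, not identically zero, such that u(θ+ω) = −u(θ)(u(θ)² − (μ + λ cos(2πθ))) for all θ ∈ ℝ/ℤ; consequently the graphs of u and −u form a set invariant under G² but not under G. -/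
/-!
With `a(θ) = μ + λ cos (2πθ)` we look for a positive `u` such that `u(θ + ω) = u(θ) (a(θ) - u(θ)²)`.
In the coordinate `y = log x` the fibre map becomes `y ↦ y + log (a(θ) - exp (2y))`, which is
increasing and contracting as long as `3 exp (2y) ≤ a(θ)` and `y` stays bounded below. It thus
suffices to find a strip which is mapped into itself; its invariant section is then given by
Banach's fixed point theorem.

The upper edge of the strip is the constant `log √(μ + |λ| - 1)`; the condition `μ ≤ 3/2 - 2|λ|`
says exactly that the fibre maps are increasing below it. The lower edge is `ψ - c` with `c` large,
where `ψ` satisfies `ψ(θ + ω) - ψ(θ) < log a(θ)`. To construct `ψ`, bound `log a` from below by the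
trigonometric polynomial `log μ + t - t²` with `t = (λ/μ) cos (2πθ)`. Its mean `log μ - (λ/μ)²/2` is
positive because `μ > 1 + λ²/2`, and its oscillating part is a coboundary of the rotation because
`2ω` is not an integer.
-/

open Function Set
open scoped NNReal

section InvariantSection

variable {Θ : Type*} [TopologicalSpace Θ]

/-- The continuous sections of `Θ × E → Θ` whose graph is contained in `K`; they form the domain of
the graph transform. -/
def sectionsIn {E : Type*} [TopologicalSpace E] (K : Set (Θ × E)) : Set C(Θ, E) :=
  {y | ∀ θ, (θ, y θ) ∈ K}

theorem isClosed_sectionsIn {E : Type*} [TopologicalSpace E] {K : Set (Θ × E)} (hK : IsClosed K) :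
    IsClosed (sectionsIn K) := by
  simp only [sectionsIn, ofPred_forall]
  exact isClosed_iInter fun θ ↦ hK.preimage (by fun_prop)

/-- The graph transform of the skew product `(θ, x) ↦ (f θ, F θ x)`: it sends a section to the one
whose graph is the image of its graph. Only sections in a set `K` preserved by the skew product are
considered, so that `F` need not be defined meaningfully outside of `K`. -/
def graphTransform {E : Type*} [TopologicalSpace E] (f : Θ ≃ₜ Θ) {F : Θ → E → E}
    {K : Set (Θ × E)} (hF : ContinuousOn (uncurry F) K)
    (hmaps : MapsTo (fun z ↦ (f z.1, F z.1 z.2)) K K) (y : sectionsIn K) : sectionsIn K where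
  val := ⟨fun θ ↦ F (f.symm θ) (y.1 (f.symm θ)),
    hF.comp_continuous (f := fun θ ↦ (f.symm θ, y.1 (f.symm θ))) (by fun_prop) fun _ ↦ y.2 _⟩
  property θ := by
    have hmem : (f (f.symm θ), F (f.symm θ) (y.1 (f.symm θ))) ∈ K := hmaps (y.2 (f.symm θ))
    rwa [f.apply_symm_apply] at hmem

variable {E : Type*} [MetricSpace E]

theorem lipschitzWith_graphTransform [CompactSpace Θ] (f : Θ ≃ₜ Θ) {F : Θ → E → E}
    {K : Set (Θ × E)} (hF : ContinuousOn (uncurry F) K)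
    (hmaps : MapsTo (fun z ↦ (f z.1, F z.1 z.2)) K K) {κ : ℝ≥0}
    (hlip : ∀ θ, LipschitzOnWith κ (F θ) {x | (θ, x) ∈ K}) :
    LipschitzWith κ (graphTransform f hF hmaps) := by
  refine LipschitzWith.of_dist_le_mul fun y z ↦ (ContinuousMap.dist_le (by positivity)).2 fun θ ↦ ?_
  calc dist (F (f.symm θ) (y.1 (f.symm θ))) (F (f.symm θ) (z.1 (f.symm θ)))
      ≤ κ * dist (y.1 (f.symm θ)) (z.1 (f.symm θ)) :=
        (hlip _).dist_le_mul _ (y.2 _) _ (z.2 _)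
    _ ≤ κ * dist y.1 z.1 := by gcongr; exact ContinuousMap.dist_apply_le_dist _

theorem exists_invariant_section [CompactSpace Θ] [CompleteSpace E] (f : Θ ≃ₜ Θ) {F : Θ → E → E}
    {K : Set (Θ × E)} (hK : IsClosed K) (hne : (sectionsIn K).Nonempty)
    (hF : ContinuousOn (uncurry F) K) (hmaps : MapsTo (fun z ↦ (f z.1, F z.1 z.2)) K K)
    {κ : ℝ≥0} (hκ : κ < 1) (hlip : ∀ θ, LipschitzOnWith κ (F θ) {x | (θ, x) ∈ K}) :
    ∃ y ∈ sectionsIn K, ∀ θ, y (f θ) = F θ (y θ) := by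
  have : CompleteSpace (sectionsIn K) := (isClosed_sectionsIn hK).completeSpace_coe
  have : Nonempty (sectionsIn K) := hne.to_subtype
  have hcontr : ContractingWith κ (graphTransform f hF hmaps) :=
    ⟨hκ, lipschitzWith_graphTransform f hF hmaps hlip⟩
  let y := hcontr.fixedPoint
  have hfix : graphTransform f hF hmaps y = y := hcontr.fixedPoint_isFixedPt
  refine ⟨y, y.2, fun θ ↦ ?_⟩
  calc y.1 (f θ) = (graphTransform f hF hmaps y).1 (f θ) := by rw [hfix]
    _ = F (f.symm (f θ)) (y.1 (f.symm (f θ))) := rfl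
    _ = F θ (y.1 θ) := by rw [f.symm_apply_apply]

end InvariantSection

section LogCubic

open Real

/-- The cubic map `x ↦ x * (a - x ^ 2)` in the coordinate `y = log x`. It is meaningful only where
`exp (2 * y) < a`, since `Real.log` is `log |·|` on negative numbers. -/
noncomputable def logCubic (a y : ℝ) : ℝ := y + log (a - exp (2 * y))

variable {a y L : ℝ}

theorem exp_logCubic (h : exp (2 * y) < a) : exp (logCubic a y) = exp y * (a - exp y ^ 2) := by
  rw [logCubic, exp_add, exp_log (sub_pos.2 h), two_mul, exp_add, sq]

theorem continuousOn_logCubic : ContinuousOn (uncurry logCubic) {z | exp (2 * z.2) < z.1} :=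
  continuousOn_snd.add <| ContinuousOn.log (by fun_prop) fun _ hz ↦ (sub_pos.2 hz).ne'

theorem hasDerivAt_logCubic (h : exp (2 * y) < a) :
    HasDerivAt (logCubic a) (1 - 2 * exp (2 * y) / (a - exp (2 * y))) y := by
  have hexp : HasDerivAt (fun y ↦ exp (2 * y)) (exp (2 * y) * 2) y := by
    simpa using ((hasDerivAt_id y).const_mul 2).exp
  convert! (hasDerivAt_id y).add ((hexp.const_sub a).log (sub_pos.2 h).ne') using 1
  ring

theorem exp_lt_of_le_of_three_mul_exp_le (ha : 3 * exp (2 * L) ≤ a) (hy : y ≤ L) :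
    exp (2 * y) < a := by
  have : exp (2 * y) ≤ exp (2 * L) := by gcongr
  linarith [exp_pos (2 * L)]

theorem two_mul_exp_div_sub_exp_le_one (ha : 3 * exp (2 * L) ≤ a) (hy : y ≤ L) :
    2 * exp (2 * y) / (a - exp (2 * y)) ≤ 1 := by
  have : exp (2 * y) ≤ exp (2 * L) := by gcongr
  rw [div_le_one (sub_pos.2 (exp_lt_of_le_of_three_mul_exp_le ha hy))]
  linarith

theorem monotoneOn_logCubic (ha : 3 * exp (2 * L) ≤ a) : MonotoneOn (logCubic a) (Iic L) := by
  have hderiv (y) (hy : y ∈ Iic L) :=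
    hasDerivAt_logCubic (exp_lt_of_le_of_three_mul_exp_le ha hy)
  refine monotoneOn_of_hasDerivWithinAt_nonneg (convex_Iic L)
    (fun y hy ↦ (hderiv y hy).continuousAt.continuousWithinAt)
    (fun y hy ↦ (hderiv y (interior_subset hy)).hasDerivWithinAt) fun y hy ↦ ?_
  exact sub_nonneg.2 (two_mul_exp_div_sub_exp_le_one ha (mem_Iic.1 (interior_subset hy)))

theorem lipschitzOnWith_logCubic {A m : ℝ} (ha : 3 * exp (2 * L) ≤ a) (haA : a ≤ A) :
    LipschitzOnWith (1 - 2 * exp (2 * m) / A).toNNReal (logCubic a) (Icc m L) := by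
  refine (convex_Icc m L).lipschitzOnWith_of_nnnorm_hasDerivWithin_le
    (fun y hy ↦ (hasDerivAt_logCubic <|
      exp_lt_of_le_of_three_mul_exp_le ha hy.2).hasDerivWithinAt) fun y hy ↦ ?_
  have hpos : 0 < a - exp (2 * y) := sub_pos.2 (exp_lt_of_le_of_three_mul_exp_le ha hy.2)
  have hle : 2 * exp (2 * m) / A ≤ 2 * exp (2 * y) / (a - exp (2 * y)) := by
    gcongr
    · exact hy.1
    · linarith [exp_pos (2 * y)]
  rw [← norm_toNNReal, norm_of_nonneg (sub_nonneg.2 (two_mul_exp_div_sub_exp_le_one ha hy.2))]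
  gcongr

theorem logCubic_le (ha : 3 * exp (2 * L) ≤ a) (ha' : a ≤ 1 + exp (2 * L)) (hy : y ≤ L) :
    logCubic a y ≤ L := by
  have hlog : log (a - exp (2 * L)) ≤ 0 :=
    log_nonpos (by linarith [exp_pos (2 * L)]) (by linarith)
  calc logCubic a y ≤ logCubic a L := monotoneOn_logCubic ha hy self_mem_Iic hy
    _ ≤ L := by rw [logCubic]; linarith

end LogCubic

section Barriers

open Real

variable {Θ : Type*} [TopologicalSpace Θ] [CompactSpace Θ]

theorem exists_lower_barrier_logCubic (f : C(Θ, Θ)) (a ψ : C(Θ, ℝ)) (L : ℝ) (ha : ∀ θ, 0 < a θ)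
    (hψ : ∀ θ, ψ (f θ) - ψ θ < log (a θ)) :
    ∃ p : C(Θ, ℝ), ∀ θ, p θ ≤ L ∧ p (f θ) ≤ logCubic (a θ) (p θ) := by
  have hgap (θ) : 0 < a θ - exp (ψ (f θ) - ψ θ) := sub_pos.2 ((lt_log_iff_exp_lt (ha θ)).1 (hψ θ))
  -- The translate `ψ - c` works as soon as `exp (-2c)` is below the following quantity.
  obtain ⟨δ, hδ, hle⟩ := isCompact_univ.exists_forall_le' (a := 0)
    (f := fun θ ↦ min (exp (2 * L)) (a θ - exp (ψ (f θ) - ψ θ)) / exp (2 * ψ θ))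
    (by fun_prop (disch := exact fun _ _ ↦ (exp_pos _).ne'))
    fun θ _ ↦ div_pos (lt_min (exp_pos _) (hgap θ)) (exp_pos _)
  refine ⟨ψ + ContinuousMap.const Θ (log δ / 2), fun θ ↦ ?_⟩
  have hexp : exp (2 * (ψ θ + log δ / 2)) = δ * exp (2 * ψ θ) := by
    rw [mul_add, mul_div_cancel₀ _ two_ne_zero, exp_add, exp_log hδ, mul_comm]
  obtain ⟨hL, hstep⟩ := le_min_iff.1 ((le_div_iff₀ (exp_pos _)).1 (hle θ (mem_univ θ)))
  rw [← hexp] at hL hstep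
  simp only [ContinuousMap.add_apply, ContinuousMap.const_apply, logCubic]
  constructor
  · linarith [exp_le_exp.1 hL]
  · have hincr : ψ (f θ) - ψ θ ≤ log (a θ - exp (2 * (ψ θ + log δ / 2))) := by
      rw [le_log_iff_exp_le (by linarith [exp_pos (ψ (f θ) - ψ θ)])]
      linarith
    linarith

theorem exists_invariant_section_logCubic (f : Θ ≃ₜ Θ) {a p : C(Θ, ℝ)} {L : ℝ}
    (hlow : ∀ θ, 3 * exp (2 * L) ≤ a θ) (hup : ∀ θ, a θ ≤ 1 + exp (2 * L)) (hpL : ∀ θ, p θ ≤ L)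
    (hp : ∀ θ, p (f θ) ≤ logCubic (a θ) (p θ)) :
    ∃ y : C(Θ, ℝ), (∀ θ, y θ ≤ L) ∧ ∀ θ, y (f θ) = logCubic (a θ) (y θ) := by
  obtain ⟨m, hm⟩ := (isCompact_range p.continuous).bddBelow
  have hmp (θ) : m ≤ p θ := hm (mem_range_self θ)
  let K : Set (Θ × ℝ) := {z | p z.1 ≤ z.2} ∩ {z | z.2 ≤ L}
  have hK : IsClosed K :=
    (isClosed_le (by fun_prop) continuous_snd).inter (isClosed_le continuous_snd continuous_const)
  have hcont : ContinuousOn (uncurry fun θ ↦ logCubic (a θ)) K :=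
    continuousOn_logCubic.comp (f := fun z : Θ × ℝ ↦ (a z.1, z.2)) (by fun_prop) fun z hz ↦
      exp_lt_of_le_of_three_mul_exp_le (hlow z.1) hz.2
  have hmaps : MapsTo (fun z ↦ (f z.1, logCubic (a z.1) z.2)) K K := fun z hz ↦
    ⟨(hp z.1).trans (monotoneOn_logCubic (hlow z.1) (hpL z.1) hz.2 hz.1),
      logCubic_le (hlow z.1) (hup z.1) hz.2⟩
  have hκ : (1 - 2 * exp (2 * m) / (1 + exp (2 * L))).toNNReal < 1 :=
    toNNReal_lt_one.2 (sub_lt_self 1 (by positivity))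
  obtain ⟨y, hyK, hy⟩ := exists_invariant_section f hK
    ⟨p, fun θ ↦ ⟨le_refl (p θ), hpL θ⟩⟩ hcont hmaps hκ
    fun θ ↦ (lipschitzOnWith_logCubic (hlow θ) (hup θ)).mono fun x hx ↦
      ⟨(hmp θ).trans hx.1, hx.2⟩
  exact ⟨y, fun θ ↦ (hyK θ).2, hy⟩

theorem exists_pos_invariant_section_cubic (f : Θ ≃ₜ Θ) (a ψ : C(Θ, ℝ)) {b : ℝ} (hb : 0 < b)
    (hlow : ∀ θ, 3 * b ≤ a θ) (hup : ∀ θ, a θ ≤ 1 + b) (hψ : ∀ θ, ψ (f θ) - ψ θ < log (a θ)) :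
    ∃ u : C(Θ, ℝ), (∀ θ, 0 < u θ) ∧ ∀ θ, u (f θ) = u θ * (a θ - u θ ^ 2) := by
  have hL : exp (2 * (log b / 2)) = b := by rw [mul_div_cancel₀ _ two_ne_zero, exp_log hb]
  rw [← hL] at hlow hup
  have ha (θ) : 0 < a θ := (mul_pos three_pos (exp_pos _)).trans_le (hlow θ)
  obtain ⟨p, hp⟩ := exists_lower_barrier_logCubic f a ψ (log b / 2) ha hψ
  obtain ⟨y, hyL, hy⟩ := exists_invariant_section_logCubic f hlow hup (fun θ ↦ (hp θ).1)
    fun θ ↦ (hp θ).2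
  refine ⟨⟨fun θ ↦ exp (y θ), by fun_prop⟩, fun θ ↦ exp_pos _, fun θ ↦ ?_⟩
  calc exp (y (f θ)) = exp (logCubic (a θ) (y θ)) := by rw [hy]
    _ = exp (y θ) * (a θ - exp (y θ) ^ 2) :=
      exp_logCubic (exp_lt_of_le_of_three_mul_exp_le (hlow θ) (hyL θ))

end Barriers

section Rotation

theorem sub_sq_le_log_one_add {t : ℝ} (ht : |t| ≤ 1 / 3) : t - t ^ 2 ≤ Real.log (1 + t) := by
  have htaylor : |-t + t ^ 2 / 2 + Real.log (1 + t)| ≤ |t| ^ 3 / (1 - |t|) := by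
    have h := Real.abs_log_sub_add_sum_range_le (x := -t) (by rw [abs_neg]; linarith) 2
    norm_num [Finset.sum_range_succ] at h
    exact h
  have herror : |t| ^ 3 / (1 - |t|) ≤ t ^ 2 / 2 := by
    rw [div_le_iff₀ (by linarith), ← sq_abs t]
    nlinarith [sq_nonneg |t|]
  linarith [(abs_le.1 htaylor).1]

theorem div_sq_div_two_lt_log {lam μ : ℝ} (h : 1 + lam ^ 2 / 2 < μ) :
    (lam / μ) ^ 2 / 2 < Real.log μ := by
  have hμ : 1 < μ := by linarith [sq_nonneg lam]
  calc (lam / μ) ^ 2 / 2 = lam ^ 2 / 2 / μ / μ := by ring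
    _ ≤ lam ^ 2 / 2 / μ := div_le_self (by positivity) hμ.le
    _ < (μ - 1) / μ := by gcongr; linarith
    _ = 1 - μ⁻¹ := by field_simp
    _ ≤ Real.log μ := Real.one_sub_inv_le_log_of_pos (by linarith)

variable {T : ℝ}

theorem re_fourier_two (θ : AddCircle T) :
    (fourier 2 θ).re = 2 * (fourier 1 θ).re ^ 2 - 1 := by
  have hnorm : (fourier 1 θ).re ^ 2 + (fourier 1 θ).im ^ 2 = 1 := by
    rw [fourier_one, ← Complex.normSq_add_mul_I]
    simp
  rw [show (2 : ℤ) = 1 + 1 from rfl, fourier_add, Complex.mul_re]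
  linarith

theorem re_fourier_one_coe (θ : ℝ) :
    (fourier 1 (θ : UnitAddCircle)).re = Real.cos (2 * Real.pi * θ) := by
  rw [fourier_one, AddCircle.toCircle_apply_mk, Circle.coe_exp,
    Complex.exp_ofReal_mul_I_re, div_one]

theorem abs_mul_re_fourier_le (r : ℝ) (n : ℤ) (θ : AddCircle T) : |r * (fourier n θ).re| ≤ |r| := by
  have hre : |(fourier n θ).re| ≤ 1 := (Complex.abs_re_le_norm _).trans_eq (Circle.norm_coe _)
  rw [abs_mul]
  exact mul_le_of_le_one_right (abs_nonneg r) hre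

variable [hT : Fact (0 < T)] {ω : AddCircle T}

theorem exists_sub_eq_re_fourier {n : ℤ} (hω : n • ω ≠ 0) :
    ∃ S : C(AddCircle T, ℝ), ∀ θ, S (θ + ω) - S θ = (fourier n θ).re := by
  have hne : fourier n ω - 1 ≠ 0 := by
    rw [sub_ne_zero, fourier_apply, Ne, Circle.coe_eq_one, ← AddCircle.toCircle_zero (T := T)]
    exact (AddCircle.injective_toCircle hT.out.ne').ne hω
  refine ⟨⟨fun θ ↦ (fourier n θ / (fourier n ω - 1)).re, by fun_prop⟩, fun θ ↦ ?_⟩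
  have hadd : fourier n (θ + ω) = fourier n θ * fourier n ω := by
    simp only [fourier_apply, smul_add, AddCircle.toCircle_add, Circle.coe_mul]
  simp only [ContinuousMap.coe_mk]
  rw [← Complex.sub_re, ← sub_div, hadd, ← mul_sub_one, mul_div_cancel_right₀ _ hne]

theorem exists_sub_le_log_one_add_mul_re_fourier {r : ℝ} (hr : |r| ≤ 1 / 3)
    (hω : (2 : ℤ) • ω ≠ 0) :
    ∃ ψ : C(AddCircle T, ℝ), ∀ θ,
      ψ (θ + ω) - ψ θ ≤ Real.log (1 + r * (fourier 1 θ).re) + r ^ 2 / 2 := by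
  have hω₁ : (1 : ℤ) • ω ≠ 0 := fun h ↦ hω (by rw [← mul_one (2 : ℤ), mul_smul, h, smul_zero])
  obtain ⟨S₁, hS₁⟩ := exists_sub_eq_re_fourier hω₁
  obtain ⟨S₂, hS₂⟩ := exists_sub_eq_re_fourier hω
  refine ⟨r • S₁ - (r ^ 2 / 2) • S₂, fun θ ↦ ?_⟩
  set c := (fourier 1 θ).re
  calc (r • S₁ - (r ^ 2 / 2) • S₂) (θ + ω) - (r • S₁ - (r ^ 2 / 2) • S₂) θ
      = r * (S₁ (θ + ω) - S₁ θ) - r ^ 2 / 2 * (S₂ (θ + ω) - S₂ θ) := by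
        simp only [ContinuousMap.sub_apply, ContinuousMap.smul_apply, smul_eq_mul]
        ring
    _ = r * c - (r * c) ^ 2 + r ^ 2 / 2 := by rw [hS₁, hS₂, re_fourier_two]; ring
    _ ≤ Real.log (1 + r * c) + r ^ 2 / 2 := by
        gcongr
        exact sub_sq_le_log_one_add ((abs_mul_re_fourier_le r 1 θ).trans hr)

theorem exists_sub_lt_log_add_mul_re_fourier {μ lam : ℝ} (hω : (2 : ℤ) • ω ≠ 0)
    (hlam : 3 * |lam| ≤ μ) (hμ : 1 + lam ^ 2 / 2 < μ) :
    ∃ ψ : C(AddCircle T, ℝ), ∀ θ,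
      ψ (θ + ω) - ψ θ < Real.log (μ + lam * (fourier 1 θ).re) := by
  have hμ₀ : 0 < μ := by linarith [sq_nonneg lam]
  have hr : |lam / μ| ≤ 1 / 3 := by
    rw [abs_div, abs_of_pos hμ₀, div_le_iff₀ hμ₀]
    linarith
  obtain ⟨ψ, hψ⟩ := exists_sub_le_log_one_add_mul_re_fourier hr hω
  refine ⟨ψ, fun θ ↦ ?_⟩
  set t := lam / μ * (fourier 1 θ).re with ht
  have hpos : 0 < 1 + t := by
    linarith [neg_le_of_abs_le ((abs_mul_re_fourier_le (lam / μ) 1 θ).trans hr)]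
  calc ψ (θ + ω) - ψ θ ≤ Real.log (1 + t) + (lam / μ) ^ 2 / 2 := hψ θ
    _ < Real.log (1 + t) + Real.log μ := by gcongr; exact div_sq_div_two_lt_log hμ
    _ = Real.log (μ + lam * (fourier 1 θ).re) := by
      rw [← Real.log_mul hpos.ne' hμ₀.ne', ht]
      congr 1
      field_simp

theorem exists_pos_invariant_section_addCircle {μ lam : ℝ} (hω : (2 : ℤ) • ω ≠ 0)
    (h2 : 1 + lam ^ 2 / 2 < μ) (h3 : μ ≤ 3 / 2 - 2 * |lam|) :
    ∃ u : C(AddCircle T, ℝ), (∀ θ, 0 < u θ) ∧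
      ∀ θ, u (θ + ω) = u θ * (μ + lam * (fourier 1 θ).re - u θ ^ 2) := by
  have hlam (θ : AddCircle T) := abs_le.1 (abs_mul_re_fourier_le lam 1 θ)
  have hsq := sq_nonneg lam
  obtain ⟨ψ, hψ⟩ := exists_sub_lt_log_add_mul_re_fourier hω (by linarith) h2
  exact exists_pos_invariant_section_cubic (.addRight ω)
    ⟨fun θ ↦ μ + lam * (fourier 1 θ).re, by fun_prop⟩ ψ (b := μ + |lam| - 1)
    (by linarith [abs_nonneg lam])
    (fun θ ↦ by simp only [ContinuousMap.coe_mk]; linarith [hlam θ])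
    (fun θ ↦ by simp only [ContinuousMap.coe_mk]; linarith [hlam θ]) hψ

end Rotation

theorem stmt15_general {ω μ lam : ℝ} (hω : ∀ n : ℤ, 2 * ω ≠ n)
    (h2 : 1 + lam ^ 2 / 2 < μ) (h3 : μ ≤ 3 / 2 - 2 * |lam|) :
    ∃ u : ℝ → ℝ, Continuous u ∧ Periodic u 1 ∧ (∀ θ, 0 < u θ) ∧
      ∀ θ, u (θ + ω) = -(u θ * (u θ ^ 2 - (μ + lam * Real.cos (2 * Real.pi * θ)))) := by
  have hω' : (2 : ℤ) • (ω : UnitAddCircle) ≠ 0 := by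
    rw [← AddCircle.coe_zsmul, Ne, AddCircle.coe_eq_zero_iff]
    rintro ⟨n, hn⟩
    exact hω n (by simpa using hn.symm)
  obtain ⟨u, hpos, hu⟩ := exists_pos_invariant_section_addCircle hω' h2 h3
  refine ⟨fun θ ↦ u θ, by fun_prop, fun θ ↦ by simp, fun θ ↦ hpos θ, fun θ ↦ ?_⟩
  simp only [AddCircle.coe_add, hu, re_fourier_one_coe]
  ring

/-- (First item of Proposition `existence of period doubling`.)
For irrational `ω` and parameters with `0 < |λ| < μ` and `1 + λ²/2 < μ < 3/2 - 2|λ|`,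
the model map `G(θ,x) = (θ+ω, x(x² - (μ + λ cos 2πθ)))` has a two-periodic continuous
non-trivial invariant curve: there is a continuous `1`-periodic `u : ℝ → ℝ`
(modelling `u : ℝ/ℤ → ℝ`), not identically zero, with
`u(θ+ω) = -u(θ)(u(θ)² - (μ + λ cos 2πθ))` for all `θ` — so the graphs of `u` and `-u`
form a set invariant under `G²` but not under `G`. -/
theorem stmt15 (ω : ℝ) (hω : Irrational ω) (μ lam : ℝ)
    (h0 : 0 < |lam|) (h1 : |lam| < μ)
    (h2 : 1 + lam ^ 2 / 2 < μ) (h3 : μ < 3 / 2 - 2 * |lam|) :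
    ∃ u : ℝ → ℝ, Continuous u ∧ Function.Periodic u 1 ∧ (∃ θ, u θ ≠ 0) ∧
      ∀ θ, u (θ + ω) = -(u θ * (u θ ^ 2 - (μ + lam * Real.cos (2 * Real.pi * θ)))) := by
  obtain ⟨u, hcont, hper, hpos, hu⟩ := stmt15_general
    (fun n ↦ by simpa using (hω.intCast_mul two_ne_zero).ne_int n) h2 h3.le
  exact ⟨u, hcont, hper, ⟨0, (hpos 0).ne'⟩, hu⟩
end

section
/- Let μ, λ ∈ ℝ with 0 ≤ |λ| < μ and μ + 2|λ| < 3/2, and set β = √((μ − |λ|)/3) and h(θ,x) = −x(x² − (μ + λ cos(2πθ))). Then there exists δ ∈ (0,β) such that, with I = [−β + δ, β − δ]: (a) for every θ ∈ ℝ/ℤ and every x ∈ I, h(θ,x) ∈ I, i.e. the cylinder (ℝ/ℤ)×I is invariant under (θ,x) ↦ (θ+ω, h(θ,x)); and (b) for every θ ∈ ℝ/ℤ and every x ∈ I, ∂_x h(θ,x) = −3x² + μ + λ cos(2πθ) > 0, i.e. h(θ,·) is strictly increasing on I. -/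
/-!
With `a = μ + λ cos 2πθ` the fiber map is the odd cubic `x ↦ x (a - x²)`, and `a` ranges over
`[p, q] = [μ - |λ|, μ + |λ|]`. On `[-b, b]` this cubic is increasing as soon as `3b² ≤ p`, and then
`[-b, b]` is invariant as soon as its right endpoint satisfies `b (a - b²) ≤ b`, for which
`q - 1 ≤ b²` suffices. A half-width `b < β = √(p / 3)` with `q - 1 ≤ b²` exists because
`μ + 2|λ| < 3/2` says exactly that `q - 1 < p / 3 = β²`.
-/

open Set

/-- The fiber map `h(θ, ·)` of the quasiperiodically forced cubic family, as a function of the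
value `a = μ + λ cos 2πθ` of the forcing. -/
def cubicMap {R : Type*} [CommRing R] (a x : R) : R :=
  -(x * (x ^ 2 - a))

section CommRing

variable {R : Type*} [CommRing R]

theorem cubicMap_neg (a x : R) : cubicMap a (-x) = -cubicMap a x := by
  unfold cubicMap
  ring

theorem cubicMap_sub_cubicMap (a x y : R) :
    cubicMap a y - cubicMap a x = (y - x) * (a - (x ^ 2 + x * y + y ^ 2)) := by
  unfold cubicMap
  ring

end CommRing

theorem hasDerivAt_cubicMap {𝕜 : Type*} [NontriviallyNormedField 𝕜] (a x : 𝕜) :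
    HasDerivAt (cubicMap a) (a - 3 * x ^ 2) x := by
  have h := ((hasDerivAt_id' x).mul ((hasDerivAt_pow 2 x).sub_const a)).neg
  refine h.congr_deriv ?_
  push_cast
  ring

section Ordered

variable {R : Type*} [CommRing R] [LinearOrder R] [IsStrictOrderedRing R] {a b x y : R}

theorem sq_add_mul_add_sq_lt_of_mem_Icc (hx : x ∈ Icc (-b) b) (hy : y ∈ Icc (-b) b)
    (hxy : x ≠ y) : x ^ 2 + x * y + y ^ 2 < 3 * b ^ 2 := by
  have hxb : x ^ 2 ≤ b ^ 2 := sq_le_sq' hx.1 hx.2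
  have hyb : y ^ 2 ≤ b ^ 2 := sq_le_sq' hy.1 hy.2
  have hsub : 0 < (x - y) ^ 2 := sq_pos_of_ne_zero (sub_ne_zero.2 hxy)
  linarith

theorem strictMonoOn_cubicMap (hab : 3 * b ^ 2 ≤ a) : StrictMonoOn (cubicMap a) (Icc (-b) b) := by
  intro x hx y hy hxy
  have hquad := sq_add_mul_add_sq_lt_of_mem_Icc hx hy hxy.ne
  rw [← sub_pos, cubicMap_sub_cubicMap]
  exact mul_pos (sub_pos.2 hxy) (sub_pos.2 (hquad.trans_le hab))

theorem cubicMap_le_self (hx : 0 ≤ x) (ha : a - 1 ≤ x ^ 2) : cubicMap a x ≤ x :=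
  calc cubicMap a x = x * (a - x ^ 2) := by unfold cubicMap; ring
    _ ≤ x := mul_le_of_le_one_right hx (sub_le_comm.1 ha)

theorem mapsTo_cubicMap_Icc (hb : 0 ≤ b) (hab : 3 * b ^ 2 ≤ a) (ha : a - 1 ≤ b ^ 2) :
    MapsTo (cubicMap a) (Icc (-b) b) (Icc (-b) b) := by
  have hend : cubicMap a b ≤ b := cubicMap_le_self hb ha
  refine (strictMonoOn_cubicMap hab).monotoneOn.mapsTo_Icc.mono_right (Icc_subset_Icc ?_ hend)
  rw [cubicMap_neg]
  exact neg_le_neg hend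

theorem three_mul_sq_lt_of_mem_Icc (hab : 3 * b ^ 2 < a) (hx : x ∈ Icc (-b) b) :
    3 * x ^ 2 < a :=
  (mul_le_mul_of_nonneg_left (sq_le_sq' hx.1 hx.2) zero_le_three).trans_lt hab

end Ordered

theorem exists_lt_sqrt_lt_sq {m c : ℝ} (hc : 0 < c) (hmc : m < c) :
    ∃ b, 0 < b ∧ b < √c ∧ m < b ^ 2 := by
  obtain ⟨t, hmt, htc⟩ := exists_between (max_lt hc hmc)
  obtain ⟨ht, hmt⟩ := max_lt_iff.1 hmt
  exact ⟨√t, Real.sqrt_pos.2 ht, Real.sqrt_lt_sqrt ht.le htc, by rwa [Real.sq_sqrt ht.le]⟩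

theorem add_mul_cos_mem_Icc (μ lam t : ℝ) :
    μ + lam * Real.cos t ∈ Icc (μ - |lam|) (μ + |lam|) := by
  have h : |lam * Real.cos t| ≤ |lam| := by
    rw [abs_mul]
    exact mul_le_of_le_one_right (abs_nonneg lam) (Real.abs_cos_le_one t)
  exact ⟨by linarith [neg_le_of_abs_le h], by linarith [le_of_abs_le h]⟩

/-- For `0 ≤ |λ| < μ` and `μ + 2|λ| < 3/2`, setting
`β = √((μ - |λ|)/3)` and `h(θ,x) = -x(x² - (μ + λ cos 2πθ))`, there exists
`δ ∈ (0,β)` such that with `I = [-β+δ, β-δ]`: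
(a) every fiber map `h(θ,·)` maps `I` into `I` (so the cylinder `(ℝ/ℤ) × I` is
invariant under `(θ,x) ↦ (θ+ω, h(θ,x))`); and
(b) on `I` one has `∂ₓh(θ,x) = -3x² + μ + λ cos 2πθ > 0`, so `h(θ,·)` is strictly
increasing on `I`. -/
theorem stmt17 (ω μ lam : ℝ) (h0 : 0 ≤ |lam|) (h1 : |lam| < μ)
    (h2 : μ + 2 * |lam| < 3 / 2) :
    ∃ δ : ℝ, 0 < δ ∧ δ < Real.sqrt ((μ - |lam|) / 3) ∧
      (∀ θ x : ℝ,
        x ∈ Set.Icc (-Real.sqrt ((μ - |lam|) / 3) + δ) (Real.sqrt ((μ - |lam|) / 3) - δ) →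
          -(x * (x ^ 2 - (μ + lam * Real.cos (2 * Real.pi * θ)))) ∈
            Set.Icc (-Real.sqrt ((μ - |lam|) / 3) + δ) (Real.sqrt ((μ - |lam|) / 3) - δ)) ∧
      (∀ θ x : ℝ,
        x ∈ Set.Icc (-Real.sqrt ((μ - |lam|) / 3) + δ) (Real.sqrt ((μ - |lam|) / 3) - δ) →
          deriv (fun y => -(y * (y ^ 2 - (μ + lam * Real.cos (2 * Real.pi * θ))))) x =
              -3 * x ^ 2 + μ + lam * Real.cos (2 * Real.pi * θ) ∧
            0 < -3 * x ^ 2 + μ + lam * Real.cos (2 * Real.pi * θ)) ∧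
      (∀ θ : ℝ,
        StrictMonoOn (fun x => -(x * (x ^ 2 - (μ + lam * Real.cos (2 * Real.pi * θ)))))
          (Set.Icc (-Real.sqrt ((μ - |lam|) / 3) + δ) (Real.sqrt ((μ - |lam|) / 3) - δ))) := by
  obtain ⟨b, hb, hbβ, hqb⟩ : ∃ b, 0 < b ∧ b < √((μ - |lam|) / 3) ∧ μ + |lam| - 1 < b ^ 2 :=
    exists_lt_sqrt_lt_sq (by linarith) (by linarith)
  have hbp : 3 * b ^ 2 < μ - |lam| := by linarith [(Real.lt_sqrt hb.le).1 hbβ]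
  have ha (θ : ℝ) := add_mul_cos_mem_Icc μ lam (2 * Real.pi * θ)
  have hab (θ : ℝ) : 3 * b ^ 2 < μ + lam * Real.cos (2 * Real.pi * θ) := hbp.trans_le (ha θ).1
  refine ⟨√((μ - |lam|) / 3) - b, sub_pos.2 hbβ, sub_lt_self _ hb, ?_⟩
  rw [neg_add_eq_sub, sub_sub_cancel_left, sub_sub_cancel]
  refine ⟨fun θ x hx => ?_, fun θ x hx => ⟨?_, ?_⟩, fun θ => strictMonoOn_cubicMap (hab θ).le⟩
  · exact mapsTo_cubicMap_Icc hb.le (hab θ).le (by linarith [(ha θ).2]) hx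
  · exact (hasDerivAt_cubicMap _ x).deriv.trans (by ring)
  · linarith [three_mul_sq_lt_of_mem_Icc (hab θ) hx]
end
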